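/- The class of finite solvable SST-groups is closed under taking subgroups and epimorphic images: if G is a finite solvable SST-group, then every subgroup of G is a solvable SST-group, and for every normal subgroup N of G the quotient G/N is a solvable SST-group. -/

import Mathlib

open scoped Pointwise

section Defs

variable {G : Type*} [Group G]

/-- `K` is an SS-permutable supplement of `H` in `G`: `HK = G` and `H` permutes with
every Sylow subgroup of `K`. -/
def IsSSSupplement (H K : Subgroup G) : Prop :=
  (H : Set G) * (K : Set G) = Set.univ ∧
    ∀ (p : ℕ) [Fact p.Prime] (P : Sylow p K),
      (H : Set G) * ((P.toSubgroup.map K.subtype : Subgroup G) : Set G) =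
        ((P.toSubgroup.map K.subtype : Subgroup G) : Set G) * (H : Set G)

/-- `H` is SS-permutable in `G`: `H` has a supplement `K` such that `H` permutes with
every Sylow subgroup of `K`. -/
def IsSSPermutable (H : Subgroup G) : Prop :=
  ∃ K : Subgroup G, IsSSSupplement H K

/-- `H` is NSS-permutable in `G`: `H` has a normal supplement `K` such that `H` permutes
with every Sylow subgroup of `K`. -/
def IsNSSPermutable (H : Subgroup G) : Prop :=
  ∃ K : Subgroup G, K.Normal ∧ IsSSSupplement H K

/-- `H` is S-permutable in `G`: it permutes with every Sylow subgroup of `G`. -/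
def IsSPermutable (H : Subgroup G) : Prop :=
  ∀ (p : ℕ) [Fact p.Prime] (P : Sylow p G),
    (H : Set G) * ((P : Subgroup G) : Set G) = ((P : Subgroup G) : Set G) * (H : Set G)

/-- `H` is semipermutable in `G`: `HX = XH` for every subgroup `X` with `gcd(|H|,|X|) = 1`. -/
def IsSemipermutable (H : Subgroup G) : Prop :=
  ∀ X : Subgroup G, Nat.Coprime (Nat.card H) (Nat.card X) →
    (H : Set G) * (X : Set G) = (X : Set G) * (H : Set G)

/-- `H` is S-semipermutable in `G`: `HQ = QH` for every Sylow `q`-subgroup `Q` of `G`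
with `q` a prime not dividing `|H|`. -/
def IsSSemipermutable (H : Subgroup G) : Prop :=
  ∀ (q : ℕ) [Fact q.Prime], ¬ q ∣ Nat.card H → ∀ Q : Sylow q G,
    (H : Set G) * ((Q : Subgroup G) : Set G) = ((Q : Subgroup G) : Set G) * (H : Set G)

end Defs

/-- `G` is an SST-group: SS-permutability is a transitive relation. -/
def IsSSTGroup (G : Type*) [Group G] : Prop :=
  ∀ H K : Subgroup G, H ≤ K → IsSSPermutable (H.subgroupOf K) → IsSSPermutable K →
    IsSSPermutable H

/-- `G` is an NSST-group: NSS-permutability is a transitive relation. -/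
def IsNSSTGroup (G : Type*) [Group G] : Prop :=
  ∀ H K : Subgroup G, H ≤ K → IsNSSPermutable (H.subgroupOf K) → IsNSSPermutable K →
    IsNSSPermutable H

/-- `G` is a PST-group: S-permutability is a transitive relation. -/
def IsPSTGroup (G : Type*) [Group G] : Prop :=
  ∀ H K : Subgroup G, H ≤ K → IsSPermutable (H.subgroupOf K) → IsSPermutable K →
    IsSPermutable H

/-- `G` is a BT-group: semipermutability is a transitive relation. -/
def IsBTGroup (G : Type*) [Group G] : Prop :=
  ∀ H K : Subgroup G, H ≤ K → IsSemipermutable (H.subgroupOf K) → IsSemipermutable K →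
    IsSemipermutable H

section Permuting

variable {G : Type*} [Group G]

theorem Subgroup.mul_comm_of_mul_subset {H K : Subgroup G}
    (h : (H : Set G) * (K : Set G) ⊆ (K : Set G) * (H : Set G)) :
    (H : Set G) * (K : Set G) = (K : Set G) * (H : Set G) := by
  refine Set.Subset.antisymm h ?_
  have := Set.inv_subset_inv.mpr h
  simpa only [mul_inv_rev, inv_coe_set] using this

theorem Subgroup.coe_sup_of_mul_comm {H K : Subgroup G}
    (h : (H : Set G) * (K : Set G) = (K : Set G) * (H : Set G)) :
    ((H ⊔ K : Subgroup G) : Set G) = (H : Set G) * (K : Set G) := by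
  let M : Subgroup G :=
    { carrier := (H : Set G) * (K : Set G)
      one_mem' := ⟨1, H.one_mem, 1, K.one_mem, mul_one 1⟩
      mul_mem' := fun {a b} ha hb => by
        have hab := Set.mul_mem_mul ha hb
        rwa [mul_assoc, ← mul_assoc (K : Set G), ← h, mul_assoc, coe_mul_coe, ← mul_assoc,
          coe_mul_coe] at hab
      inv_mem' := fun {a} ha => by
        have hinv := Set.inv_mem_inv.mpr ha
        rwa [mul_inv_rev, inv_coe_set, inv_coe_set, ← h] at hinv }
  refine Set.Subset.antisymm ?_ (Set.mul_subset_iff.mpr fun x hx y hy =>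
    Subgroup.mul_mem_sup hx hy)
  exact sup_le (a := H) (b := K) (c := M) (fun x hx => ⟨x, hx, 1, K.one_mem, mul_one x⟩)
    (fun x hx => ⟨1, H.one_mem, x, hx, one_mul x⟩)

/-- A subgroup that contains the commutator subgroup of a normal subgroup `D` permutes with
the Sylow subgroups of `D`. -/
theorem Subgroup.mul_sylow_comm_of_commutator_le [Finite G] {H D : Subgroup G} [D.Normal]
    (hD : ⁅D, D⁆ ≤ H) {p : ℕ} [Fact p.Prime] (P : Sylow p D) :
    (H : Set G) * ((P.toSubgroup.map D.subtype : Subgroup G) : Set G) =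
      ((P.toSubgroup.map D.subtype : Subgroup G) : Set G) * (H : Set G) := by
  apply Subgroup.mul_comm_of_mul_subset
  rintro _ ⟨h, hh, _, ⟨x, hx, rfl⟩, rfl⟩
  obtain ⟨d, hd⟩ := MulAction.exists_smul_eq D P ((MulAut.conjNormal h : MulAut D) • P)
  have hmem : (MulAut.conjNormal h : MulAut D) • x ∈ (d • P).toSubgroup := by
    rw [hd]
    exact Subgroup.smul_mem_pointwise_smul x _ _ hx
  obtain ⟨y, hy, hyx⟩ := hmem
  have hconj : (d : G) * y * (d : G)⁻¹ = h * x * h⁻¹ := congrArg Subtype.val hyx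
  refine ⟨y, ⟨y, hy, rfl⟩, ((y : G)⁻¹ * d * ((y : G)⁻¹)⁻¹ * (d : G)⁻¹) * h,
    H.mul_mem (hD (Subgroup.commutator_mem_commutator (D.inv_mem y.2) d.2)) hh, ?_⟩
  have : h * x = (d : G) * y * (d : G)⁻¹ * h := by rw [hconj]; group
  change (y : G) * (((y : G)⁻¹ * d * ((y : G)⁻¹)⁻¹ * (d : G)⁻¹) * h) = h * x
  rw [this]
  group

theorem isSSSupplement_of_isPGroup {H K : Subgroup G} {p : ℕ} [Fact p.Prime]
    (hK : IsPGroup p K) (hHK : (H : Set G) * (K : Set G) = Set.univ) : IsSSSupplement H K := by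
  refine ⟨hHK, fun q _ Q => ?_⟩
  rcases eq_or_ne q p with rfl | hqp
  · have hQ : Q.toSubgroup = ⊤ :=
      (Q.is_maximal' (hK.to_subgroup ⊤) le_top).symm
    rw [hQ, ← MonoidHom.range_eq_map, Subgroup.range_subtype, hHK]
    simpa only [mul_inv_rev, inv_coe_set, Set.inv_univ] using (congrArg (·⁻¹) hHK).symm
  · have hQ : Q.toSubgroup = ⊥ :=
      disjoint_top.mp (IsPGroup.disjoint_of_ne q p hqp _ _ Q.isPGroup' (hK.to_subgroup ⊤))
    simp [hQ]

theorem IsSSPermutable.subgroupOf {H L : Subgroup G} (hHL : H ≤ L) (hH : IsSSPermutable H) :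
    IsSSPermutable (H.subgroupOf L) := by
  obtain ⟨K, hK, hperm⟩ := hH
  refine ⟨K.subgroupOf L, Set.eq_univ_of_forall fun l => ?_, fun p _ Q => ?_⟩
  · obtain ⟨h, hh, k, hk, hl⟩ := hK.symm ▸ Set.mem_univ (l : G)
    have hl : h * k = l := hl
    have hkL : k ∈ L := by
      rw [← inv_mul_cancel_left h k, hl]
      exact L.mul_mem (L.inv_mem (hHL hh)) l.2
    exact ⟨⟨h, hHL hh⟩, hh, ⟨k, hkL⟩, hk, Subtype.ext hl⟩
  · obtain ⟨P, hP⟩ := Q.exists_comap_eq_of_injective (f := L.subtype.subgroupComap K)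
      fun a b hab => Subtype.ext (Subtype.ext (congrArg (fun k : K => (k : G)) hab))
    apply Subgroup.mul_comm_of_mul_subset
    rintro _ ⟨h, hh, _, ⟨x, hx, rfl⟩, rfl⟩
    have hxP : L.subtype.subgroupComap K x ∈ P := by
      rw [← hP] at hx
      exact hx
    obtain ⟨_, ⟨y, hy, rfl⟩, h', hh', hyh⟩ :=
      (hperm p P).subset ⟨h, hh, _, ⟨_, hxP, rfl⟩, rfl⟩
    have hyh : (y : G) * h' = h * (x : L) := hyh
    have hyL : (y : G) ∈ L := by
      rw [← mul_inv_cancel_right (y : G) h', hyh]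
      exact L.mul_mem (L.mul_mem h.2 (x : L).2) (L.inv_mem (hHL hh'))
    refine ⟨⟨y, hyL⟩, ⟨⟨⟨y, hyL⟩, y.2⟩, ?_, rfl⟩, ⟨h', hHL hh'⟩, hh', Subtype.ext hyh⟩
    rw [← hP]
    exact hy

theorem IsSSPermutable.map [Finite G] {G' : Type*} [Group G'] {f : G →* G'}
    (hf : Function.Surjective f) {H : Subgroup G} (hH : IsSSPermutable H) :
    IsSSPermutable (H.map f) := by
  obtain ⟨K, hK, hperm⟩ := hH
  refine ⟨K.map f, ?_, fun p _ Q => ?_⟩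
  · rw [Subgroup.coe_map, Subgroup.coe_map, ← Set.image_mul, hK, Set.image_univ, hf.range_eq]
  · obtain ⟨P, rfl⟩ := Sylow.mapSurjective_surjective (f.subgroupMap_surjective K) p Q
    have hmap : ((P.mapSurjective (f.subgroupMap_surjective K)).toSubgroup.map
        (K.map f).subtype) = (P.toSubgroup.map K.subtype).map f := by
      rw [Sylow.coe_mapSurjective, Subgroup.map_map, Subgroup.map_map]
      rfl
    rw [hmap, Subgroup.coe_map f, Subgroup.coe_map f, ← Set.image_mul, ← Set.image_mul,
      hperm p P]

/-- Every proper subgroup of a finite solvable group is SS-permutable in a strictly larger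
subgroup. -/
theorem exists_lt_isSSPermutable_subgroupOf [Finite G] [Group.IsSolvable G] {H : Subgroup G}
    (hH : H ≠ ⊤) : ∃ M : Subgroup G, H < M ∧ IsSSPermutable (H.subgroupOf M) := by
  classical
  have hex : ∃ n, derivedSeries G n ≤ H := by
    obtain ⟨n, hn⟩ := (Group.isSolvable_def G).mp inferInstance
    exact ⟨n, hn ▸ bot_le⟩
  obtain ⟨n, hn⟩ : ∃ n, Nat.find hex = n + 1 := by
    refine Nat.exists_eq_succ_of_ne_zero fun h0 => hH (top_le_iff.mp ?_)
    simpa [h0] using Nat.find_spec hex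
  have hDH : ¬ derivedSeries G n ≤ H := Nat.find_min hex (by lia)
  have hcomm : ⁅derivedSeries G n, derivedSeries G n⁆ ≤ H := by
    simpa only [hn, derivedSeries_succ] using Nat.find_spec hex
  have hnormal : (derivedSeries G n).Normal := derivedSeries_normal G n
  generalize derivedSeries G n = D at hDH hcomm hnormal
  have hindex : (H.subgroupOf D).index ≠ 1 := by
    rwa [Ne, Subgroup.index_eq_one, Subgroup.subgroupOf_eq_top]
  have : Fact (H.subgroupOf D).index.minFac.Prime := ⟨Nat.minFac_prime hindex⟩
  let P : Sylow (H.subgroupOf D).index.minFac D := default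
  have hPH : ¬ P.toSubgroup.map D.subtype ≤ H := fun hle =>
    P.not_dvd_index <| (Nat.minFac_dvd _).trans <|
      Subgroup.index_dvd_of_le (Subgroup.map_le_iff_le_comap.mp hle)
  have hperm := Subgroup.mul_sylow_comm_of_commutator_le hcomm P
  have hpP : IsPGroup (H.subgroupOf D).index.minFac (P.toSubgroup.map D.subtype) :=
    P.isPGroup'.map _
  generalize P.toSubgroup.map D.subtype = R at hPH hperm hpP
  refine ⟨H ⊔ R, left_lt_sup.mpr hPH, R.subgroupOf (H ⊔ R), ?_⟩
  refine isSSSupplement_of_isPGroup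
    (hpP.comap_of_injective _ (Subgroup.subtype_injective _)) (Set.eq_univ_of_forall fun m => ?_)
  have hsup : (m : G) ∈ (H : Set G) * (R : Set G) := by
    rw [← Subgroup.coe_sup_of_mul_comm hperm]
    exact m.2
  obtain ⟨h, hh, r, hr, hm⟩ := hsup
  exact ⟨⟨h, le_sup_left (b := R) hh⟩, hh, ⟨r, le_sup_right (a := H) hr⟩, hr, Subtype.ext hm⟩

theorem IsSSTGroup.isSSPermutable [Finite G] [Group.IsSolvable G] (hG : IsSSTGroup G)
    (H : Subgroup G) : IsSSPermutable H := by
  induction H using WellFoundedGT.induction with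
  | ind H ih =>
    rcases eq_or_ne H ⊤ with rfl | hH
    · exact ⟨⊥, by simp, fun p _ P => by simp [Subsingleton.elim P.toSubgroup ⊥]⟩
    · obtain ⟨M, hHM, hM⟩ := exists_lt_isSSPermutable_subgroupOf hH
      exact hG H M hHM.le hM (ih M hHM)

theorem isSSTGroup_of_forall_isSSPermutable (h : ∀ H : Subgroup G, IsSSPermutable H) :
    IsSSTGroup G :=
  fun H _ _ _ _ => h H

end Permuting

/-- Corollary 1.6: the class of finite solvable SST-groups is closed under taking
subgroups and epimorphic images. -/
theorem solvable_sst_group_closed_subgroups_quotients {G : Type*} [Group G] [Finite G]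
    (hsol : IsSolvable G) (hsst : IsSSTGroup G) :
    (∀ H : Subgroup G, IsSolvable H ∧ IsSSTGroup H) ∧
      ∀ (N : Subgroup G) [N.Normal], IsSolvable (G ⧸ N) ∧ IsSSTGroup (G ⧸ N) := by
  have : Group.IsSolvable G := hsol
  refine ⟨fun L => ⟨inferInstanceAs (Group.IsSolvable L),
      isSSTGroup_of_forall_isSSPermutable fun H => ?_⟩,
    fun N _ => ⟨inferInstanceAs (Group.IsSolvable (G ⧸ N)),
      isSSTGroup_of_forall_isSSPermutable fun H => ?_⟩⟩
  · have := (hsst.isSSPermutable (H.map L.subtype)).subgroupOf (Subgroup.map_subtype_le H)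
    rwa [Subgroup.subgroupOf, Subgroup.comap_map_eq_self_of_injective L.subtype_injective] at this
  · have hf := QuotientGroup.mk'_surjective N
    have := (hsst.isSSPermutable (H.comap (QuotientGroup.mk' N))).map hf
    rwa [Subgroup.map_comap_eq_self_of_surjective hf] at this
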